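/- For every n ≥ 2, the family {T_P : P a Riordan partition of {1,…,n}} is a basis of the ℚ-vector space Inv(sl₂^{⊗n}) of invariant tensors. (This is the tree basis given by values of the sl₂ weight system on Riordan trees.) -/

import Mathlib

/- Theorem (tree basis): for every n ≥ 2, the family {T_P}, indexed by Riordan
   partitions P of {1,…,n}, is a basis of the ℚ-vector space Inv(sl₂^{⊗n}).
   Here T_P is the tensor obtained by placing, for each block
   B = {j₁ < ⋯ < j_k} of P, the i-th factor of the κ-dual t_k of the iterated
   bracket form in position jᵢ; it is characterized (uniquely, κ being
   nondegenerate) by κ^{⊗n}(T_P, x₁⊗⋯⊗xₙ) = ∏_{B∈P} κ([[⋯[x_{j₁},x_{j₂}],⋯],x_{j_{k−1}}], x_{j_k}).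
   κ and the family T are quantified via their defining properties. -/

open scoped TensorProduct

set_option synthInstance.maxHeartbeats 1000000
set_option maxHeartbeats 1000000

noncomputable section

abbrev sl2 : Type := ↥(LieAlgebra.SpecialLinear.sl (Fin 2) ℚ)

def H : sl2 :=
  ⟨!![1, 0; 0, -1], show _ ∈ LinearMap.ker (Matrix.traceLinearMap (Fin 2) ℚ ℚ) from
    LinearMap.mem_ker.2 (by simp [Matrix.trace_fin_two])⟩

def E : sl2 :=
  ⟨!![0, 1; 0, 0], show _ ∈ LinearMap.ker (Matrix.traceLinearMap (Fin 2) ℚ ℚ) from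
    LinearMap.mem_ker.2 (by simp [Matrix.trace_fin_two])⟩

def F : sl2 :=
  ⟨!![0, 0; 1, 0], show _ ∈ LinearMap.ker (Matrix.traceLinearMap (Fin 2) ℚ ℚ) from
    LinearMap.mem_ker.2 (by simp [Matrix.trace_fin_two])⟩

abbrev TP (n : ℕ) : Type := ⨂[ℚ] (_ : Fin n), sl2

/-- The adjoint action of `x ∈ sl₂` on `sl₂^{⊗n}`, extended as a derivation. -/
def actOn (n : ℕ) (x : sl2) : TP n →ₗ[ℚ] TP n :=
  ∑ i : Fin n,
    PiTensorProduct.map (fun j => if j = i then LieAlgebra.ad ℚ sl2 x else LinearMap.id)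

/-- The space of invariant tensors of `sl₂^{⊗n}`. -/
def Invariants (n : ℕ) : Submodule ℚ (TP n) :=
  ⨅ x : sl2, LinearMap.ker (actOn n x)

/-- Pairing of `sl₂^{⊗n}` against `x₁ ⊗ ⋯ ⊗ xₙ` via `κ^{⊗n}`. -/
def pairT (κ : sl2 →ₗ[ℚ] sl2 →ₗ[ℚ] ℚ) (n : ℕ) (x : Fin n → sl2) : TP n →ₗ[ℚ] ℚ :=
  PiTensorProduct.lift
    ((MultilinearMap.mkPiAlgebra ℚ (Fin n) ℚ).compLinearMap fun i => κ.flip (x i))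

/-- Left-iterated Lie bracket of a list: `[[⋯[a₁,a₂],⋯],a_k]`. -/
def lBrk : List sl2 → sl2
  | [] => 0
  | a :: l => l.foldl (fun y z => ⁅y, z⁆) a

/-- For a block `B = {j₁ < ⋯ < j_k}`: `κ([[⋯[x_{j₁},x_{j₂}],⋯],x_{j_{k−1}}], x_{j_k})`. -/
def blockVal (κ : sl2 →ₗ[ℚ] sl2 →ₗ[ℚ] ℚ) {n : ℕ} (x : Fin n → sl2)
    (B : Finset (Fin n)) : ℚ :=
  κ (lBrk (((B.sort (· ≤ ·)).map x).dropLast)) (((B.sort (· ≤ ·)).map x).getLastD 0)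

/-- `P` is a set partition of `Fin n` all of whose blocks have ≥ 2 elements. -/
def IsPartitionGe2 (n : ℕ) (P : Finset (Finset (Fin n))) : Prop :=
  (∀ i : Fin n, ∃! B, B ∈ P ∧ i ∈ B) ∧ (∀ B ∈ P, 2 ≤ B.card)

/-- `P` is non-crossing. -/
def IsNonCrossing (n : ℕ) (P : Finset (Finset (Fin n))) : Prop :=
  ¬ ∃ i j k l : Fin n, i < j ∧ j < k ∧ k < l ∧
      ∃ B ∈ P, ∃ C ∈ P, B ≠ C ∧ i ∈ B ∧ k ∈ B ∧ j ∈ C ∧ l ∈ C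

def IsRiordanPartition (n : ℕ) (P : Finset (Finset (Fin n))) : Prop :=
  IsPartitionGe2 n P ∧ IsNonCrossing n P

inductive Lt where
  | e : Lt
  | h : Lt
  | f : Lt

namespace Lt

def wt : Lt → ℤ
  | e => 1
  | h => 0
  | f => -1

def vec : Lt → sl2
  | e => E
  | h => H
  | f => F

def toOpt : Lt → Option Bool
  | e => none
  | h => some true
  | f => some false

theorem toOpt_inj : Function.Injective toOpt := by
  intro a b
  cases a <;> cases b <;> simp [toOpt]

instance : Fintype Lt where
  elems := ⟨[e, h, f], by simp⟩
  complete := by intro x; cases x <;> simp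

theorem sum_univ {M : Type*} [AddCommMonoid M] (g : Lt → M) :
    ∑ x : Lt, g x = g e + (g h + g f) := by
  change (Multiset.map g ([e, h, f] : List Lt)).sum = _
  simp

end Lt

/-! ### the Lie algebra -/

theorem sl2_decomp (x : sl2) :
    x = x.1 0 0 • H + x.1 0 1 • E + x.1 1 0 • F := by
  have hx : Matrix.trace x.1 = 0 := by
    have h : x.1 ∈ LinearMap.ker (Matrix.traceLinearMap (Fin 2) ℚ ℚ) := x.2
    exact LinearMap.mem_ker.1 h
  rw [Matrix.trace_fin_two] at hx
  apply Subtype.ext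
  ext i j
  have : x.1 1 1 = - x.1 0 0 := by linarith
  fin_cases i <;> fin_cases j <;> simp [H, E, F, this]

theorem brHE : ⁅H, E⁆ = (2:ℚ) • E := by
  apply Subtype.ext
  ext i j
  fin_cases i <;> fin_cases j <;> simp [H, E, F, Ring.lie_def]
  norm_num
theorem brHF : ⁅H, F⁆ = (-2:ℚ) • F := by
  apply Subtype.ext
  ext i j
  fin_cases i <;> fin_cases j <;> simp [H, E, F, Ring.lie_def]
  norm_num
theorem brEF : ⁅E, F⁆ = H := by
  apply Subtype.ext
  ext i j
  fin_cases i <;> fin_cases j <;> simp [H, E, F, Ring.lie_def]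
theorem brEH : ⁅E, H⁆ = (-2:ℚ) • E := by
  rw [← lie_skew, brHE]; simp
theorem brFH : ⁅F, H⁆ = (2:ℚ) • F := by
  rw [← lie_skew, brHF]; simp
theorem brFE : ⁅F, E⁆ = (-1:ℚ) • H := by
  rw [← lie_skew, brEF]; simp

structure Good (κ : sl2 →ₗ[ℚ] sl2 →ₗ[ℚ] ℚ) : Prop where
  hHH : κ H H = 2
  hEF : κ E F = 1
  hFE : κ F E = 1
  hHE : κ H E = 0
  hEH : κ E H = 0
  hHF : κ H F = 0
  hFH : κ F H = 0
  hEE : κ E E = 0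
  hFF : κ F F = 0

theorem Good.inv {κ : sl2 →ₗ[ℚ] sl2 →ₗ[ℚ] ℚ} (g : Good κ) (y a b : sl2) :
    κ ⁅y, a⁆ b = - κ a ⁅y, b⁆ := by
  rw [sl2_decomp y, sl2_decomp a, sl2_decomp b]
  simp only [lie_add, add_lie, lie_smul, smul_lie, brHE, brHF, brEF, brEH, brFH, brFE, lie_self,
    map_add, map_smul, LinearMap.add_apply, LinearMap.smul_apply, g.hHH, g.hEF, g.hFE, g.hHE,
    g.hEH, g.hHF, g.hFH, g.hEE, g.hFF, smul_eq_mul, map_zero, LinearMap.zero_apply]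
  ring

def dualVec : Lt → sl2
  | .e => F
  | .h => (1/2 : ℚ) • H
  | .f => E

theorem Good.expand {κ : sl2 →ₗ[ℚ] sl2 →ₗ[ℚ] ℚ} (g : Good κ) (x : sl2) :
    x = ∑ l : Lt, κ x l.vec • dualVec l := by
  rw [Lt.sum_univ]
  rw [sl2_decomp x]
  simp only [Lt.vec, dualVec, 
    map_add, map_smul, LinearMap.add_apply, LinearMap.smul_apply, g.hHH, g.hEF, g.hFE, g.hHE,
    g.hEH, g.hHF, g.hFH, g.hEE, g.hFF, smul_eq_mul, map_zero, LinearMap.zero_apply]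
  module

theorem E_ne : E ≠ 0 := by
  intro h
  have := congrArg (fun x : sl2 => x.1 0 1) h
  simp [E] at this

theorem lieH_vec (l : Lt) : ⁅H, l.vec⁆ = (2 * (l.wt : ℚ)) • l.vec := by
  cases l <;> simp [Lt.vec, Lt.wt, brHE, brHF]

theorem wt_bound {x : sl2} {k : ℤ} (hx : x ≠ 0) (h : ⁅H, x⁆ = (2 * (k : ℚ)) • x) : k ≤ 1 := by
  by_contra hk
  have hk' : (2:ℚ) ≤ k := by exact_mod_cast (by omega : (2:ℤ) ≤ k)
  apply hx
  have h2 : ⁅H, x⁆ = (2 * x.1 0 1) • E + (-2 * x.1 1 0) • F := by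
    conv_lhs => rw [sl2_decomp x]
    simp only [lie_add, lie_smul, lie_self, brHE, brHF]
    module
  rw [h2] at h
  have e1 := congrArg (fun x : sl2 => x.1 0 1) h
  have e2 := congrArg (fun x : sl2 => x.1 0 0) h
  have e3 := congrArg (fun x : sl2 => x.1 1 0) h
  simp [E, F] at e1 e2 e3
  rw [sl2_decomp x]
  have z1 : x.1 0 1 = 0 := by
    rcases e1 with h | h
    · omega
    · exact h
  have z3 : x.1 1 0 = 0 := by
    have : (-2 - 2 * (k:ℚ)) * x.1 1 0 = 0 := by linarith
    rcases mul_eq_zero.1 this with h | h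
    · linarith
    · exact h
  have z2 : x.1 0 0 = 0 := by
    rcases e2 with h | h
    · omega
    · exact h
  simp [z1, z2, z3]

/-! ### iterated brackets -/

theorem lBrk_append {l : List sl2} (hl : l ≠ []) (a : sl2) : lBrk (l ++ [a]) = ⁅lBrk l, a⁆ := by
  cases l with
  | nil => exact absurd rfl hl
  | cons b l => simp [lBrk]

theorem lBrk_wt (l : List Lt) (hl : l ≠ []) :
    ⁅H, lBrk (l.map Lt.vec)⁆ = (2 * (((l.map Lt.wt).sum : ℤ) : ℚ)) • lBrk (l.map Lt.vec) := by
  induction l using List.reverseRecOn with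
  | nil => exact absurd rfl hl
  | append_singleton l a ih =>
    by_cases h : l = []
    · subst h; simpa [lBrk] using lieH_vec a
    · rw [List.map_append, List.map_singleton, lBrk_append (by simpa using h), leibniz_lie, ih h,
        lieH_vec]
      simp only [smul_lie, lie_smul, List.map_append, List.sum_append, List.map_singleton,
        List.sum_singleton]
      push_cast
      module

theorem lBrk_prefix_ne (l l' : List sl2) (hl : l ≠ []) (h : lBrk (l ++ l') ≠ 0) : lBrk l ≠ 0 := by
  induction l' using List.reverseRecOn with
  | nil => simpa using h
  | append_singleton l' a ih =>
    apply ih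
    intro h0
    apply h
    rw [← List.append_assoc, lBrk_append (by simp [hl]), h0, zero_lie]

/-- value of a list -/
def lVal (κ : sl2 →ₗ[ℚ] sl2 →ₗ[ℚ] ℚ) (l : List sl2) : ℚ := κ (lBrk l.dropLast) (l.getLastD 0)

theorem lVal_append (κ : sl2 →ₗ[ℚ] sl2 →ₗ[ℚ] ℚ) (l : List sl2) (a : sl2) :
    lVal κ (l ++ [a]) = κ (lBrk l) a := by
  simp [lVal]

theorem Good.lVal_wt {κ : sl2 →ₗ[ℚ] sl2 →ₗ[ℚ] ℚ} (g : Good κ) (l : List Lt)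
    (hl : 2 ≤ l.length) (h : lVal κ (l.map Lt.vec) ≠ 0) :
    (l.map Lt.wt).sum = 0 ∧ ∀ l1 l2, l = l1 ++ l2 → l2 ≠ [] → (l1.map Lt.wt).sum ≤ 1 := by
  obtain ⟨m, a, rfl⟩ : ∃ m a, l = m ++ [a] := by
    rcases List.eq_nil_or_concat l with h | ⟨m, a, h⟩
    · simp [h] at hl
    · exact ⟨m, a, by simpa using h⟩
  have hm : m ≠ [] := by rintro rfl; simp at hl
  rw [List.map_append, List.map_singleton, lVal_append] at h
  constructor
  · have h1 := g.inv H (lBrk (m.map Lt.vec)) a.vec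
    rw [lBrk_wt m hm, lieH_vec] at h1
    simp only [map_smul, LinearMap.smul_apply, smul_eq_mul] at h1
    have h2 : ((((m.map Lt.wt).sum : ℤ) : ℚ) + a.wt) * κ (lBrk (m.map Lt.vec)) a.vec = 0 := by
      linarith
    have := (mul_eq_zero.1 h2).resolve_right h
    simp only [List.map_append, List.sum_append, List.map_singleton, List.sum_singleton]
    exact_mod_cast this
  · intro l1 l2 h12 hl2
    obtain ⟨l3, a', rfl⟩ : ∃ m a, l2 = m ++ [a] := by
      rcases List.eq_nil_or_concat l2 with h | ⟨m, a, h⟩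
      · exact absurd h hl2
      · exact ⟨m, a, by simpa using h⟩
    rw [← List.append_assoc] at h12
    have h13 : m = l1 ++ l3 := (List.append_inj' h12 rfl).1
    by_cases h1 : l1 = []
    · simp [h1]
    · refine wt_bound (x := lBrk (l1.map Lt.vec)) ?_ (lBrk_wt l1 h1)
      apply lBrk_prefix_ne _ (l3.map Lt.vec) (by simpa using h1)
      rw [← List.map_append, ← h13]
      intro h0
      apply h
      rw [h0]; simp

theorem lBrk_EH (k : ℕ) : lBrk ((Lt.e :: List.replicate k Lt.h).map Lt.vec) = ((-2:ℚ)^k) • E := by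
  induction k with
  | zero => simp [lBrk, Lt.vec]
  | succ k ih =>
    rw [List.replicate_succ', ← List.cons_append, List.map_append, List.map_singleton,
      lBrk_append (by simp), ih]
    simp only [Lt.vec, smul_lie, brEH, smul_smul, pow_succ]

theorem Good.lVal_EHF {κ : sl2 →ₗ[ℚ] sl2 →ₗ[ℚ] ℚ} (g : Good κ) (l : List Lt)
    (hl : ∀ x ∈ l, x = Lt.h) : lVal κ ((Lt.e :: l ++ [Lt.f]).map Lt.vec) ≠ 0 := by
  obtain ⟨k, rfl⟩ : ∃ k, l = List.replicate k Lt.h := ⟨_, List.eq_replicate_of_mem hl⟩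
  rw [List.map_append, List.map_singleton, lVal_append, lBrk_EH]
  simp [Lt.vec, g.hEF]

/-! ### invariance of iterated brackets -/

theorem lBrk_lie {ι : Type*} [DecidableEq ι] (y : sl2) (x : ι → sl2) (l : List ι) (hn : l.Nodup) :
    (l.map fun i => lBrk (l.map (Function.update x i ⁅y, x i⁆))).sum = ⁅y, lBrk (l.map x)⁆ := by
  induction l using List.reverseRecOn with
  | nil => simp [lBrk]
  | append_singleton l a ih =>
    rw [List.nodup_append] at hn
    have ha : a ∉ l := fun h => hn.2.2 a h a (by simp) rfl
    by_cases hl : l = []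
    · subst hl; simp [lBrk]
    have hl' : ∀ z : ι → sl2, l.map z ≠ [] := by simpa using hl
    have key : l.map (Function.update x a ⁅y, x a⁆) = l.map x := by
      apply List.map_congr_left
      intro b hb
      rw [Function.update_of_ne]
      rintro rfl; exact ha hb
    simp only [List.map_append, List.map_singleton, List.sum_append, List.sum_singleton,
      lBrk_append (hl' _), key, Function.update_self]
    rw [leibniz_lie y (lBrk (l.map x)) (x a), ← ih hn.1]
    congr 1
    have : (l.map fun i => ⁅lBrk (l.map (Function.update x i ⁅y, x i⁆)),
        Function.update x i ⁅y, x i⁆ a⁆) =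
        l.map fun i => ⁅lBrk (l.map (Function.update x i ⁅y, x i⁆)), x a⁆ := by
      apply List.map_congr_left
      intro b hb
      rw [Function.update_of_ne]
      rintro rfl; exact ha hb
    rw [this]
    have h2 : ∀ (G : ι → sl2) (m : List ι),
        (m.map fun i => ⁅G i, x a⁆).sum = ⁅(m.map G).sum, x a⁆ := by
      intro G m
      induction m with
      | nil => simp
      | cons b l ih => simp [ih]
    exact h2 (fun i => lBrk (l.map (Function.update x i ⁅y, x i⁆))) l

theorem Good.lVal_lie {κ : sl2 →ₗ[ℚ] sl2 →ₗ[ℚ] ℚ} (g : Good κ)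
    {ι : Type*} [DecidableEq ι] (y : sl2) (x : ι → sl2) (l : List ι) (hn : l.Nodup) :
    (l.map fun i => lVal κ (l.map (Function.update x i ⁅y, x i⁆))).sum = 0 := by
  rcases List.eq_nil_or_concat l with h | ⟨m, a, h⟩
  · subst h; simp
  rw [List.concat_eq_append] at h
  subst h
  rw [List.nodup_append] at hn
  have ha : a ∉ m := fun h => hn.2.2 a h a (by simp) rfl
  have key : m.map (Function.update x a ⁅y, x a⁆) = m.map x := by
    apply List.map_congr_left
    intro b hb
    rw [Function.update_of_ne]
    rintro rfl; exact ha hb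
  simp only [List.map_append, List.map_singleton, List.sum_append, List.sum_singleton,
      lVal_append, key, Function.update_self]
  have : (m.map fun i => κ (lBrk (m.map (Function.update x i ⁅y, x i⁆)))
        (Function.update x i ⁅y, x i⁆ a)) =
        m.map fun i => κ (lBrk (m.map (Function.update x i ⁅y, x i⁆))) (x a) := by
    apply List.map_congr_left
    intro b hb
    rw [Function.update_of_ne]
    rintro rfl; exact ha hb
  rw [this]
  have h2 : ∀ (G : ι → sl2) (m : List ι), (m.map fun i => κ (G i) (x a)).sum = κ (m.map G).sum (x a) := by
    intro G m
    induction m with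
    | nil => simp
    | cons b l ih => simp [ih]
  rw [h2 (fun i => lBrk (m.map (Function.update x i ⁅y, x i⁆))) m, lBrk_lie y x m hn.1, g.inv]
  ring

/-! ### functionals on words -/

def lwt (w : List Lt) : ℤ := (w.map Lt.wt).sum

def dE : (List Lt → ℚ) → List Lt → ℚ
  | _, [] => 0
  | φ, Lt.e :: u => dE (fun v => φ (Lt.e :: v)) u
  | φ, Lt.h :: u => dE (fun v => φ (Lt.h :: v)) u + (-2) * φ (Lt.e :: u)
  | φ, Lt.f :: u => dE (fun v => φ (Lt.f :: v)) u + φ (Lt.h :: u)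

def dF : (List Lt → ℚ) → List Lt → ℚ
  | _, [] => 0
  | φ, Lt.e :: u => dF (fun v => φ (Lt.e :: v)) u + (-1) * φ (Lt.h :: u)
  | φ, Lt.h :: u => dF (fun v => φ (Lt.h :: v)) u + 2 * φ (Lt.f :: u)
  | φ, Lt.f :: u => dF (fun v => φ (Lt.f :: v)) u

theorem dE_lin (a : ℚ) (φ ψ : List Lt → ℚ) (w : List Lt) :
    dE (fun v => φ v + a * ψ v) w = dE φ w + a * dE ψ w := by
  induction w generalizing φ ψ with
  | nil => simp [dE]
  | cons x u ih => cases x <;> simp only [dE, ih] <;> ring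

theorem dF_lin (a : ℚ) (φ ψ : List Lt → ℚ) (w : List Lt) :
    dF (fun v => φ v + a * ψ v) w = dF φ w + a * dF ψ w := by
  induction w generalizing φ ψ with
  | nil => simp [dF]
  | cons x u ih => cases x <;> simp only [dF, ih] <;> ring

theorem dE_add (φ ψ : List Lt → ℚ) (w : List Lt) :
    dE (fun v => φ v + ψ v) w = dE φ w + dE ψ w := by
  simpa using dE_lin 1 φ ψ w

theorem dF_add (φ ψ : List Lt → ℚ) (w : List Lt) :
    dF (fun v => φ v + ψ v) w = dF φ w + dF ψ w := by
  simpa using dF_lin 1 φ ψ w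

theorem dF_smul (a : ℚ) (ψ : List Lt → ℚ) (w : List Lt) :
    dF (fun v => a * ψ v) w = a * dF ψ w := by
  induction w generalizing ψ with
  | nil => simp [dF]
  | cons x u ih => cases x <;> simp only [dF, ih] <;> ring

theorem dE_zero : dE (fun _ => 0) = fun _ => 0 := by
  funext w
  induction w with
  | nil => simp [dE]
  | cons x u ih => cases x <;> simp [dE, ih]

theorem dF_zero : dF (fun _ => 0) = fun _ => 0 := by
  funext w
  simpa using dF_smul 0 (fun _ => 0) w

theorem comm_dE_dF (φ : List Lt → ℚ) (w : List Lt) :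
    dE (dF φ) w = dF (dE φ) w - 2 * lwt w * φ w := by
  induction w generalizing φ with
  | nil => simp [dE, dF, lwt]
  | cons x u ih =>
    cases x <;> simp only [dE, dF, dE_lin, dF_lin, dE_add, dF_add, ih] <;>
      simp only [lwt, List.map_cons, List.sum_cons, Lt.wt] <;> push_cast <;> ring

/-- support condition -/
def Supp (m : ℕ) (k : ℤ) (φ : List Lt → ℚ) : Prop :=
  ∀ w, φ w ≠ 0 → w.length = m ∧ lwt w = k

theorem Supp.cons {m : ℕ} {k : ℤ} {φ : List Lt → ℚ} (h : Supp (m + 1) k φ) (x : Lt) :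
    Supp m (k - x.wt) (fun v => φ (x :: v)) := by
  intro w hw
  have := h _ hw
  simp only [List.length_cons, lwt, List.map_cons, List.sum_cons] at this
  refine ⟨by omega, ?_⟩
  unfold lwt; omega

theorem Supp.dF {m : ℕ} {k : ℤ} {φ : List Lt → ℚ} (h : Supp m k φ) : Supp m (k + 1) (dF φ) := by
  intro w hw
  induction w generalizing φ m k with
  | nil => simp [_root_.dF] at hw
  | cons x u ih =>
    have aux : ∀ y : Lt, ∀ c : ℚ, Lt.wt x = Lt.wt y + 1 →
        _root_.dF (fun v => φ (x :: v)) u + c * φ (y :: u) ≠ 0 → (x :: u).length = m ∧ lwt (x :: u) = k + 1 := by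
      intro y c hc hne
      by_cases h1 : φ (y :: u) = 0
      · rw [h1] at hne
        have h2 : _root_.dF (fun v => φ (x :: v)) u ≠ 0 := by simpa using hne
        cases m with
        | zero =>
          have : (fun v => φ (x :: v)) = fun _ => 0 := by
            funext v
            by_contra hv
            have := (h _ hv).1
            simp at this
          rw [this, dF_zero] at h2
          exact absurd rfl h2
        | succ m =>
          have := ih (h.cons x) h2
          simp only [List.length_cons, lwt, List.map_cons, List.sum_cons] at this ⊢
          omega
      · have := h _ h1
        simp only [List.length_cons, lwt, List.map_cons, List.sum_cons] at this ⊢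
        omega
    have aux2 : _root_.dF (fun v => φ (x :: v)) u ≠ 0 → (x :: u).length = m ∧ lwt (x :: u) = k + 1 := by
      intro h2
      cases m with
      | zero =>
        have : (fun v => φ (x :: v)) = fun _ => 0 := by
          funext v
          by_contra hv
          have := (h _ hv).1
          simp at this
        rw [this, dF_zero] at h2
        exact absurd rfl h2
      | succ m =>
        have := ih (h.cons x) h2
        simp only [List.length_cons, lwt, List.map_cons, List.sum_cons] at this ⊢
        omega
    cases x
    · exact aux Lt.h (-1) (by simp [Lt.wt]) (by simpa [_root_.dF] using hw)
    · exact aux Lt.f 2 (by simp [Lt.wt]) (by simpa [_root_.dF] using hw)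
    · exact aux2 (by simpa [_root_.dF] using hw)

theorem lwt_le (w : List Lt) : lwt w ≤ w.length := by
  induction w with
  | nil => simp [lwt]
  | cons x u ih =>
    simp only [lwt, List.map_cons, List.sum_cons, List.length_cons] at ih ⊢
    have : x.wt ≤ 1 := by cases x <;> simp [Lt.wt]
    push_cast
    omega

theorem dF_eq_zero {m : ℕ} {φ : List Lt → ℚ} (h : Supp m 0 φ) (hE : dE φ = fun _ => 0) :
    dF φ = fun _ => 0 := by
  have hs : ∀ j : ℕ, Supp m j (dF^[j] φ) := by
    intro j
    induction j with
    | zero => simpa using h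
    | succ j ih =>
      rw [Function.iterate_succ_apply']
      exact_mod_cast ih.dF
  have hc : ∀ j : ℕ, dE (dF^[j+1] φ) = fun w => (-(j * (j + 1) : ℚ)) * (dF^[j] φ) w := by
    intro j
    induction j with
    | zero =>
      funext w
      simp only [zero_add, Function.iterate_one, comm_dE_dF, hE, dF_zero]
      by_cases hw : φ w = 0
      · simp [hw]
      · simp [(h w hw).2]
    | succ j ih =>
      funext w
      rw [Function.iterate_succ_apply', comm_dE_dF, ih, dF_smul, ← Function.iterate_succ_apply' dF]
      by_cases hw : (dF^[j+1] φ) w = 0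
      · simp [hw]
      · rw [(hs (j+1) w hw).2]
        push_cast
        ring
  have hz : dF^[m+1] φ = fun _ => 0 := by
    funext w
    by_contra hw
    have := hs (m+1) w hw
    have := lwt_le w
    push_cast at *
    omega
  have hd : ∀ i j, j + i = m → dF^[j+1] φ = fun _ => 0 := by
    intro i
    induction i with
    | zero => intro j hj; obtain rfl : j = m := by omega
              exact hz
    | succ i ih =>
      intro j hj
      have h1 := ih (j+1) (by omega)
      have h2 := hc (j+1)
      rw [h1, dE_zero] at h2
      funext w
      have h3 := congrFun h2 w
      have h4 : (-((j+1 : ℕ) * ((j+1 : ℕ) + 1) : ℚ)) ≠ 0 := by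
        apply neg_ne_zero.2; positivity
      exact (mul_eq_zero.1 h3.symm).resolve_left h4
  exact hd m 0 (by omega)

/-- Riordan words started at height `k`. -/
def Rio : ℕ → List Lt → Prop
  | k, [] => k = 0
  | k, Lt.e :: u => Rio (k + 1) u
  | k, Lt.h :: u => 1 ≤ k ∧ Rio k u
  | k, Lt.f :: u => 1 ≤ k ∧ Rio (k - 1) u

theorem main_inj (m k : ℕ) (φ : List Lt → ℚ) (hs : Supp m (-(k:ℤ)) φ) (hE : dE φ = fun _ => 0)
    (hr : ∀ w, Rio k w → φ w = 0) : φ = fun _ => 0 := by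
  induction m generalizing k φ with
  | zero =>
    funext w
    by_contra hw
    have h := hs w hw
    obtain rfl := List.length_eq_zero_iff.1 h.1
    have h2 := h.2
    simp [lwt] at h2
    exact hw (hr [] (by simpa [Rio] using h2))
  | succ m ih =>
    have sa := hs.cons Lt.e
    have sb := hs.cons Lt.h
    have sc := hs.cons Lt.f
    simp only [Lt.wt] at sa sb sc
    have ea := fun u => congrFun hE (Lt.e :: u)
    have eb := fun u => congrFun hE (Lt.h :: u)
    have ec := fun u => congrFun hE (Lt.f :: u)
    simp only [dE] at ea eb ec
    have a0 : (fun v => φ (Lt.e :: v)) = fun _ => 0 := by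
      apply ih (k+1) _ (by convert sa using 1; push_cast; ring) (funext ea)
      intro w hw
      exact hr _ hw
    have a0' := congrFun a0
    have eb' : dE (fun v => φ (Lt.h :: v)) = fun _ => 0 := by
      funext u
      have := eb u
      simpa [a0'] using this
    have : (∀ v, φ (Lt.h :: v) = 0) ∧ (∀ v, φ (Lt.f :: v) = 0) := by
      rcases Nat.eq_zero_or_pos k with rfl | hk
      · have hF := dF_eq_zero (by simpa using hs) hE
        have fa := fun u => congrFun hF (Lt.e :: u)
        have fb := fun u => congrFun hF (Lt.h :: u)
        simp only [dF] at fa fb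
        rw [a0, dF_zero] at fa
        have b0 : ∀ v, φ (Lt.h :: v) = 0 := by
          intro v; have := fa v; simpa using this
        refine ⟨b0, ?_⟩
        intro v
        have := fb v
        rw [funext b0, dF_zero] at this
        simpa using this
      · have b0 : (fun v => φ (Lt.h :: v)) = fun _ => 0 := by
          apply ih k _ (by simpa using sb) eb'
          intro w hw
          exact hr _ ⟨hk, hw⟩
        refine ⟨congrFun b0, ?_⟩
        apply congrFun
        apply ih (k-1) _ (by convert sc using 1; omega)
        · funext u
          have := ec u
          rw [show φ (Lt.h :: u) = 0 from congrFun b0 u] at this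
          simpa using this
        · intro w hw
          exact hr _ ⟨hk, hw⟩
    funext w
    cases w with
    | nil =>
      by_contra hw
      have := (hs _ hw).1
      simp at this
    | cons x u =>
      cases x
      · exact a0' u
      · exact this.1 u
      · exact this.2 u

/-! ### from tensors to functionals on words -/

def ev : (n : ℕ) → ((Fin n → sl2) → ℚ) → List Lt → ℚ
  | 0, g, [] => g Fin.elim0
  | 0, _, _ :: _ => 0
  | _ + 1, _, [] => 0
  | n + 1, g, x :: u => ev n (fun v => g (Fin.cons x.vec v)) u

theorem ev_add (n : ℕ) (g g' : (Fin n → sl2) → ℚ) (u : List Lt) :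
    ev n (fun v => g v + g' v) u = ev n g u + ev n g' u := by
  induction n generalizing u with
  | zero => cases u <;> simp [ev]
  | succ n ih => cases u <;> simp [ev, ih]

theorem ev_smul (n : ℕ) (c : ℚ) (g : (Fin n → sl2) → ℚ) (u : List Lt) :
    ev n (fun v => c * g v) u = c * ev n g u := by
  induction n generalizing u with
  | zero => cases u <;> simp [ev]
  | succ n ih => cases u <;> simp [ev, ih]

theorem ev_zero (n : ℕ) (u : List Lt) : ev n (fun _ => 0) u = 0 := by
  simpa using ev_smul n 0 (fun _ => 0) u

theorem ev_length (n : ℕ) (g : (Fin n → sl2) → ℚ) (u : List Lt) (h : ev n g u ≠ 0) :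
    u.length = n := by
  induction n generalizing u with
  | zero => cases u <;> simp [ev] at h ⊢
  | succ n ih =>
    cases u with
    | nil => simp [ev] at h
    | cons x u => simpa using ih _ _ h

theorem ev_ofFn (n : ℕ) (g : (Fin n → sl2) → ℚ) (w : Fin n → Lt) :
    ev n g (List.ofFn w) = g (fun i => (w i).vec) := by
  induction n with
  | zero =>
    simp only [List.ofFn_zero, ev]
    congr 1
    funext i
    exact i.elim0
  | succ n ih =>
    rw [List.ofFn_succ, ev, ih]
    congr 1
    funext i
    refine Fin.cases ?_ (fun j => ?_) i <;> simp

def derv (n : ℕ) (y : sl2) (g : (Fin n → sl2) → ℚ) (x : Fin n → sl2) : ℚ :=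
  ∑ i, g (Function.update x i ⁅y, x i⁆)

theorem derv_cons (n : ℕ) (y : sl2) (g : (Fin (n+1) → sl2) → ℚ) (a : sl2) (v : Fin n → sl2) :
    derv (n+1) y g (Fin.cons a v) =
      derv n y (fun v => g (Fin.cons a v)) v + g (Fin.cons ⁅y, a⁆ v) := by
  simp only [derv, Fin.sum_univ_succ, Fin.cons_zero, Fin.cons_succ, Fin.update_cons_zero,
    ← Fin.cons_update]
  ring

theorem cons_smul {n : ℕ} (G : MultilinearMap ℚ (fun _ : Fin (n+1) => sl2) ℚ) (c : ℚ) (a : sl2)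
    (v : Fin n → sl2) : G (Fin.cons (c • a) v) = c * G (Fin.cons a v) :=
  G.cons_smul v c a

theorem dE_ev (n : ℕ) (G : MultilinearMap ℚ (fun _ : Fin n => sl2) ℚ) (u : List Lt) :
    dE (ev n G) u = ev n (derv n E G) u := by
  induction u generalizing n with
  | nil => cases n <;> simp [dE, ev, derv]
  | cons x u ih =>
    cases n with
    | zero =>
      cases x <;> simp [dE, ev, dE_zero]
    | succ n =>
      have h := fun a : sl2 => ih n (G.curryLeft a)
      have h' : ∀ a : sl2, ⇑(G.curryLeft a) = fun v => G (Fin.cons a v) := fun _ => rfl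
      simp only [h'] at h
      simp only [ev, derv_cons, ev_add]
      cases x
      · simp only [dE, ev, h]
        simp only [Lt.vec, lie_self]
        have : ∀ v : Fin n → sl2, G (Fin.cons 0 v) = 0 := fun v => by
          simpa using cons_smul G 0 0 v
        simp [this, ev_zero]
      · simp only [dE, ev, h]
        simp only [Lt.vec, brEH, cons_smul, ev_smul]
      · simp only [dE, ev, h]
        simp only [Lt.vec, brEF]

theorem dF_ev (n : ℕ) (G : MultilinearMap ℚ (fun _ : Fin n => sl2) ℚ) (u : List Lt) :
    dF (ev n G) u = ev n (derv n F G) u := by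
  induction u generalizing n with
  | nil => cases n <;> simp [dF, ev, derv]
  | cons x u ih =>
    cases n with
    | zero =>
      cases x <;> simp [dF, ev, dF_zero]
    | succ n =>
      have h := fun a : sl2 => ih n (G.curryLeft a)
      have h' : ∀ a : sl2, ⇑(G.curryLeft a) = fun v => G (Fin.cons a v) := fun _ => rfl
      simp only [h'] at h
      simp only [ev, derv_cons, ev_add]
      cases x
      · simp only [dF, ev, h]
        simp only [Lt.vec, brFE, cons_smul, ev_smul]
      · simp only [dF, ev, h]
        simp only [Lt.vec, brFH, cons_smul, ev_smul]
      · simp only [dF, ev, h]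
        simp only [Lt.vec, lie_self]
        have : ∀ v : Fin n → sl2, G (Fin.cons 0 v) = 0 := fun v => by
          simpa using cons_smul G 0 0 v
        simp [this, ev_zero]

theorem pairT_tprod (κ : sl2 →ₗ[ℚ] sl2 →ₗ[ℚ] ℚ) (n : ℕ) (x t : Fin n → sl2) :
    pairT κ n x (PiTensorProduct.tprod ℚ t) = ∏ i, κ (t i) (x i) := by
  simp [pairT]

theorem prod_upd {n : ℕ} (κ : sl2 →ₗ[ℚ] sl2 →ₗ[ℚ] ℚ) (x t : Fin n → sl2) (i : Fin n) (a : sl2) :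
    ∏ j, κ (t j) (Function.update x i a j) = κ (t i) a * ∏ j ∈ Finset.univ.erase i, κ (t j) (x j) := by
  rw [← Finset.mul_prod_erase _ _ (Finset.mem_univ i)]
  simp only [Function.update_self]
  congr 1
  apply Finset.prod_congr rfl
  intro j hj
  rw [Function.update_of_ne (Finset.ne_of_mem_erase hj)]

theorem pairT_update_add (κ : sl2 →ₗ[ℚ] sl2 →ₗ[ℚ] ℚ) (n : ℕ) (x : Fin n → sl2) (i : Fin n)
    (a b : sl2) : pairT κ n (Function.update x i (a + b)) =
      pairT κ n (Function.update x i a) + pairT κ n (Function.update x i b) := by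
  apply PiTensorProduct.ext
  ext t
  simp only [LinearMap.compMultilinearMap_apply, LinearMap.add_apply, pairT_tprod, prod_upd, map_add]
  ring

theorem pairT_update_smul (κ : sl2 →ₗ[ℚ] sl2 →ₗ[ℚ] ℚ) (n : ℕ) (x : Fin n → sl2) (i : Fin n)
    (c : ℚ) (a : sl2) : pairT κ n (Function.update x i (c • a)) =
      c • pairT κ n (Function.update x i a) := by
  apply PiTensorProduct.ext
  ext t
  simp only [LinearMap.compMultilinearMap_apply, LinearMap.smul_apply, pairT_tprod, prod_upd,
    map_smul, smul_eq_mul]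
  ring

def formOf (κ : sl2 →ₗ[ℚ] sl2 →ₗ[ℚ] ℚ) (n : ℕ) (T : TP n) :
    MultilinearMap ℚ (fun _ : Fin n => sl2) ℚ :=
  MultilinearMap.mk' (fun x => pairT κ n x T)
    (by intro x i a b; simp [pairT_update_add])
    (by intro x i c a; simp [pairT_update_smul])

theorem pairT_act {κ : sl2 →ₗ[ℚ] sl2 →ₗ[ℚ] ℚ} (g : Good κ) (n : ℕ) (y : sl2) (x : Fin n → sl2)
    (T : TP n) :
    pairT κ n x (actOn n y T) = - ∑ i, pairT κ n (Function.update x i ⁅y, x i⁆) T := by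
  have : (pairT κ n x) ∘ₗ (actOn n y) = - ∑ i, pairT κ n (Function.update x i ⁅y, x i⁆) := by
    apply PiTensorProduct.ext
    ext t
    simp only [LinearMap.compMultilinearMap_apply, LinearMap.comp_apply, LinearMap.neg_apply,
      LinearMap.sum_apply, pairT_tprod, prod_upd, actOn, PiTensorProduct.map_tprod, map_sum]
    rw [← Finset.sum_neg_distrib]
    apply Finset.sum_congr rfl
    intro i _
    rw [← Finset.mul_prod_erase _ _ (Finset.mem_univ i)]
    simp only [if_true, LieAlgebra.ad_apply, g.inv, neg_mul]
    congr 2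
    apply Finset.prod_congr rfl
    intro j hj
    rw [if_neg (Finset.ne_of_mem_erase hj)]
    rfl
  have h := congrArg (fun L : TP n →ₗ[ℚ] ℚ => L T) this
  simpa using h

theorem pairT_ext {κ : sl2 →ₗ[ℚ] sl2 →ₗ[ℚ] ℚ} (g : Good κ) (n : ℕ) (T : TP n)
    (h : ∀ w : Fin n → Lt, pairT κ n (fun i => (w i).vec) T = 0) : T = 0 := by
  have key : (LinearMap.id : TP n →ₗ[ℚ] TP n) =
      ∑ w : Fin n → Lt, (pairT κ n (fun i => (w i).vec)).smulRight
        (PiTensorProduct.tprod ℚ fun i => dualVec (w i)) := by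
    apply PiTensorProduct.ext
    ext t
    simp only [LinearMap.compMultilinearMap_apply, LinearMap.id_apply, LinearMap.sum_apply,
      LinearMap.smulRight_apply, pairT_tprod]
    conv_lhs => rw [show t = fun i => ∑ l : Lt, κ (t i) l.vec • dualVec l from
      funext fun i => g.expand (t i)]
    rw [MultilinearMap.map_sum]
    apply Finset.sum_congr rfl
    intro w _
    rw [MultilinearMap.map_smul_univ]
  have h2 := congrArg (fun L : TP n →ₗ[ℚ] TP n => L T) key
  simpa [h] using h2

theorem mem_inv_iff {κ : sl2 →ₗ[ℚ] sl2 →ₗ[ℚ] ℚ} (g : Good κ) (n : ℕ) (T : TP n) :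
    T ∈ Invariants n ↔ ∀ y x, derv n y (fun x => pairT κ n x T) x = 0 := by
  simp only [Invariants, Submodule.mem_iInf, LinearMap.mem_ker, derv]
  constructor
  · intro h y x
    have := pairT_act g n y x T
    rw [h y] at this
    simpa using this.symm
  · intro h y
    apply pairT_ext g
    intro w
    rw [pairT_act g, h]
    simp

theorem invariants_inj {κ : sl2 →ₗ[ℚ] sl2 →ₗ[ℚ] ℚ} (g : Good κ) (n : ℕ) (T : TP n)
    (hT : T ∈ Invariants n)
    (h : ∀ w : Fin n → Lt, Rio 0 (List.ofFn w) → pairT κ n (fun i => (w i).vec) T = 0) : T = 0 := by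
  rw [mem_inv_iff g] at hT
  set φ := ev n (formOf κ n T) with hφ
  have e1 : ∀ y, derv n y (formOf κ n T) = fun _ => 0 := by
    intro y
    funext x
    exact hT y x
  have hE : dE φ = fun _ => 0 := by
    funext u
    rw [hφ, dE_ev, e1, ev_zero]
  have hF : dF φ = fun _ => 0 := by
    funext u
    rw [hφ, dF_ev, e1, ev_zero]
  have hz : φ = fun _ => 0 := by
    apply main_inj n 0 φ _ hE
    · intro w hw
      by_contra hne
      have hlen := ev_length _ _ _ hne
      subst hlen
      rw [← List.ofFn_get w, hφ, ev_ofFn] at hne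
      apply hne
      apply h
      rwa [List.ofFn_get]
    · intro w hw
      refine ⟨ev_length _ _ _ hw, ?_⟩
      have := comm_dE_dF φ w
      rw [hE, hF, dE_zero, dF_zero] at this
      have h3 : (lwt w : ℚ) * φ w = 0 := by linarith
      have := (mul_eq_zero.1 h3).resolve_right hw
      simpa using this
  apply pairT_ext g
  intro w
  have := congrFun hz (List.ofFn w)
  rw [hφ, ev_ofFn] at this
  exact this

/-! ### combinatorics -/

theorem part_sum {M : Type*} [AddCommMonoid M] {n : ℕ} {P : Finset (Finset (Fin n))}
    (hP : IsPartitionGe2 n P) (g : Fin n → M) : ∑ j, g j = ∑ B ∈ P, ∑ j ∈ B, g j := by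
  classical
  have h1 : ∀ B ∈ P, ∑ j ∈ B, g j = ∑ j, if j ∈ B then g j else 0 := by
    intro B _
    rw [← Finset.sum_filter]
    congr 1
    ext j; simp
  rw [Finset.sum_congr rfl h1, Finset.sum_comm]
  apply Finset.sum_congr rfl
  intro j _
  obtain ⟨B, ⟨hB, hj⟩, hu⟩ := hP.1 j
  rw [Finset.sum_eq_single B]
  · simp [hj]
  · intro C hC hne
    rw [if_neg]
    intro hjC
    exact hne (hu C ⟨hC, hjC⟩)
  · intro h; exact absurd hB h

theorem part_unique {n : ℕ} {P : Finset (Finset (Fin n))} (hP : IsPartitionGe2 n P)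
    {B C : Finset (Fin n)} (hB : B ∈ P) (hC : C ∈ P) {i : Fin n} (h1 : i ∈ B) (h2 : i ∈ C) :
    B = C := (hP.1 i).unique ⟨hB, h1⟩ ⟨hC, h2⟩

open Classical in
def wordOf {n : ℕ} (P : Finset (Finset (Fin n))) (i : Fin n) : Lt :=
  if ∀ B ∈ P, i ∈ B → ∀ j ∈ B, i ≤ j then Lt.e
  else if ∀ B ∈ P, i ∈ B → ∀ j ∈ B, j ≤ i then Lt.f else Lt.h

open Classical in
theorem wordOf_eq {n : ℕ} {P : Finset (Finset (Fin n))} (hP : IsPartitionGe2 n P)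
    {B : Finset (Fin n)} (hB : B ∈ P) {i : Fin n} (hi : i ∈ B) :
    wordOf P i = if ∀ j ∈ B, i ≤ j then Lt.e else if ∀ j ∈ B, j ≤ i then Lt.f else Lt.h := by
  have h : ∀ p : Finset (Fin n) → Prop, (∀ C ∈ P, i ∈ C → p C) ↔ p B := by
    intro p
    constructor
    · intro h; exact h B hB hi
    · intro h C hC hiC
      rwa [part_unique hP hC hB hiC hi]
  unfold wordOf
  exact if_congr (h (fun B => ∀ j ∈ B, i ≤ j)) rfl
    (if_congr (h (fun B => ∀ j ∈ B, j ≤ i)) rfl rfl)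

def ht {n : ℕ} (w : Fin n → Lt) (k : ℕ) : ℤ := ∑ j : Fin n, if j.val < k then (w j).wt else 0

theorem ht_zero {n : ℕ} (w : Fin n → Lt) : ht w 0 = 0 := by simp [ht]

theorem ht_succ {n : ℕ} (w : Fin n → Lt) (i : Fin n) :
    ht w (i.val + 1) = ht w i.val + (w i).wt := by
  unfold ht
  have : (w i).wt = ∑ j : Fin n, if j = i then (w j).wt else 0 := by simp
  rw [this, ← Finset.sum_add_distrib]
  apply Finset.sum_congr rfl
  intro j _
  by_cases h : j = i
  · subst h; simp
  · have : j.val ≠ i.val := fun h' => h (Fin.ext h')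
    by_cases h2 : j.val < i.val
    · simp [h, h2, Nat.lt_succ_of_lt h2]
    · have : ¬ j.val < i.val + 1 := by omega
      simp [h, h2, this]

def Op {n : ℕ} (B : Finset (Fin n)) (k : ℕ) : Prop :=
  (∃ j ∈ B, j.val < k) ∧ (∃ j ∈ B, k ≤ j.val)

open Classical in
theorem block_sum_self {n : ℕ} {P : Finset (Finset (Fin n))} (hP : IsPartitionGe2 n P)
    {B : Finset (Fin n)} (hB : B ∈ P) (k : ℕ) :
    (∑ j ∈ B, if j.val < k then (wordOf P j).wt else 0) = if Op B k then (1:ℤ) else 0 := by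
  have hc := hP.2 B hB
  have hne : B.Nonempty := Finset.card_pos.1 (by omega)
  have hlt : B.min' hne < B.max' hne := Finset.min'_lt_max'_of_card B (by omega)
  have h1 : ∀ j ∈ B, (if j.val < k then (wordOf P j).wt else 0) =
      (if j = B.min' hne then (if j.val < k then 1 else 0) else 0) -
      (if j = B.max' hne then (if j.val < k then (1:ℤ) else 0) else 0) := by
    intro j hj
    rw [wordOf_eq hP hB hj]
    have e1 : (∀ i ∈ B, j ≤ i) ↔ j = B.min' hne := by
      constructor
      · intro h
        exact le_antisymm (h _ (B.min'_mem hne)) (B.min'_le j hj)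
      · rintro rfl i hi
        exact B.min'_le i hi
    have e2 : (∀ i ∈ B, i ≤ j) ↔ j = B.max' hne := by
      constructor
      · intro h
        exact le_antisymm (B.le_max' j hj) (h _ (B.max'_mem hne)) 
      · rintro rfl i hi
        exact B.le_max' i hi
    simp only [e1, e2]
    by_cases a1 : j = B.min' hne
    · have a2 : j ≠ B.max' hne := by rw [a1]; exact hlt.ne
      rw [if_pos a1, if_pos a1, if_neg a2]
      simp [Lt.wt]
    · rw [if_neg a1, if_neg a1]
      by_cases a2 : j = B.max' hne
      · rw [if_pos a2, if_pos a2]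
        split_ifs <;> simp [Lt.wt]
      · rw [if_neg a2, if_neg a2]
        simp [Lt.wt]
  rw [Finset.sum_congr rfl h1, Finset.sum_sub_distrib, Finset.sum_ite_eq', Finset.sum_ite_eq',
    if_pos (B.min'_mem hne), if_pos (B.max'_mem hne)]
  have e3 : Op B k ↔ (B.min' hne).val < k ∧ k ≤ (B.max' hne).val := by
    constructor
    · rintro ⟨⟨a, ha, hak⟩, ⟨b, hb, hbk⟩⟩
      have h1 : (B.min' hne).val ≤ a.val := B.min'_le a ha
      have h2 : b.val ≤ (B.max' hne).val := B.le_max' b hb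
      omega
    · rintro ⟨h1, h2⟩
      exact ⟨⟨_, B.min'_mem hne, h1⟩, ⟨_, B.max'_mem hne, h2⟩⟩
  have hlt' : (B.min' hne).val < (B.max' hne).val := hlt
  rw [if_congr e3 rfl rfl]
  split_ifs <;> first | rfl | omega

open Classical in
theorem ht_wordOf {n : ℕ} {P : Finset (Finset (Fin n))} (hP : IsPartitionGe2 n P) (k : ℕ) :
    ht (wordOf P) k = ((P.filter fun B => Op B k).card : ℤ) := by
  unfold ht
  rw [part_sum hP, Finset.sum_congr rfl fun B hB => block_sum_self hP hB k]
  simp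

theorem split_sorted {n : ℕ} (l : List (Fin n)) (hl : l.Pairwise (· < ·)) (k : ℕ) :
    ∃ l1 l2, l = l1 ++ l2 ∧ (∀ j ∈ l1, j.val < k) ∧ (∀ j ∈ l2, k ≤ j.val) := by
  induction l with
  | nil => exact ⟨[], [], by simp⟩
  | cons a l ih =>
    rw [List.pairwise_cons] at hl
    by_cases ha : a.val < k
    · obtain ⟨l1, l2, rfl, h1, h2⟩ := ih hl.2
      refine ⟨a :: l1, l2, rfl, ?_, h2⟩
      simpa using ⟨ha, h1⟩
    · refine ⟨[], a :: l, rfl, by simp, ?_⟩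
      intro j hj
      rcases List.mem_cons.1 hj with rfl | hj
      · omega
      · have : a.val < j.val := hl.1 j hj
        omega

theorem sort_pairwise {n : ℕ} (B : Finset (Fin n)) : (B.sort (· ≤ ·)).Pairwise (· < ·) :=
  B.sortedLT_sort.pairwise

open Classical in
theorem block_sum_le {κ : sl2 →ₗ[ℚ] sl2 →ₗ[ℚ] ℚ} (g : Good κ) {n : ℕ} (w : Fin n → Lt)
    (B : Finset (Fin n)) (hB : 2 ≤ B.card) (h : blockVal κ (fun i => (w i).vec) B ≠ 0) (k : ℕ) :
    (∑ j ∈ B, if j.val < k then (w j).wt else 0) ≤ if Op B k then (1:ℤ) else 0 := by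
  have hs := sort_pairwise B
  have hmem : ∀ j, j ∈ B ↔ j ∈ B.sort (· ≤ ·) := fun j => (Finset.mem_sort _).symm
  have hlen : (B.sort (· ≤ ·)).length = B.card := Finset.length_sort _
  have hv : lVal κ (((B.sort (· ≤ ·)).map w).map Lt.vec) ≠ 0 := by
    rw [List.map_map]; exact h
  have hnd : (B.sort (· ≤ ·)).Nodup := Finset.sort_nodup _ _
  have hsum : ∀ f : Fin n → ℤ, ∑ j ∈ B, f j = ((B.sort (· ≤ ·)).map f).sum := by
    intro f
    rw [← List.sum_toFinset f hnd]
    simp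
  rw [hsum]
  obtain ⟨h0, hpre⟩ := g.lVal_wt _ (by rw [List.length_map]; omega) hv
  obtain ⟨l1, l2, hl, h1, h2⟩ := split_sorted _ hs k
  rw [hl] at h0 hpre ⊢
  rw [hl] at hlen
  have e1 : l1.map (fun j : Fin n => if j.val < k then (w j).wt else 0) = (l1.map w).map Lt.wt := by
    rw [List.map_map]
    apply List.map_congr_left
    intro j hj
    simp [h1 j hj]
  have e2 : (l2.map (fun j : Fin n => if j.val < k then (w j).wt else 0)).sum = 0 := by
    apply List.sum_eq_zero
    intro x hx
    obtain ⟨j, hj, rfl⟩ := List.mem_map.1 hx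
    have := h2 j hj
    simp [show ¬ j.val < k by omega]
  rw [List.map_append, List.sum_append, e1, e2, add_zero]
  by_cases c2 : l2 = []
  · subst c2
    simp only [List.append_nil] at h0
    rw [h0]
    split_ifs <;> simp
  by_cases c1 : l1 = []
  · subst c1
    split_ifs <;> simp
  have hop : Op B k := by
    obtain ⟨a, ha⟩ := List.exists_mem_of_ne_nil _ c1
    obtain ⟨b, hb⟩ := List.exists_mem_of_ne_nil _ c2
    refine ⟨⟨a, ?_, h1 a ha⟩, ⟨b, ?_, h2 b hb⟩⟩
    · rw [hmem, hl]; simp [ha]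
    · rw [hmem, hl]; simp [hb]
  rw [if_pos hop]
  exact hpre (l1.map w) (l2.map w) (by simp) (by simpa using c2)

theorem ht_le {κ : sl2 →ₗ[ℚ] sl2 →ₗ[ℚ] ℚ} (g : Good κ) {n : ℕ} (w : Fin n → Lt)
    {Q : Finset (Finset (Fin n))} (hQ : IsPartitionGe2 n Q)
    (h : ∏ B ∈ Q, blockVal κ (fun i => (w i).vec) B ≠ 0) (k : ℕ) :
    ht w k ≤ ht (wordOf Q) k := by
  unfold ht
  rw [part_sum hQ, part_sum hQ]
  apply Finset.sum_le_sum
  intro B hB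
  rw [block_sum_self hQ hB]
  exact block_sum_le g w B (hQ.2 B hB) (Finset.prod_ne_zero_iff.1 h B hB) k

theorem diag_ne {κ : sl2 →ₗ[ℚ] sl2 →ₗ[ℚ] ℚ} (g : Good κ) {n : ℕ}
    {P : Finset (Finset (Fin n))} (hP : IsPartitionGe2 n P) :
    ∏ B ∈ P, blockVal κ (fun i => (wordOf P i).vec) B ≠ 0 := by
  classical
  rw [Finset.prod_ne_zero_iff]
  intro B hB
  change lVal κ ((B.sort (· ≤ ·)).map (fun i => (wordOf P i).vec)) ≠ 0
  have hs := sort_pairwise B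
  have hmem : ∀ j, j ∈ B ↔ j ∈ B.sort (· ≤ ·) := fun j => (Finset.mem_sort _).symm
  have hlen : (B.sort (· ≤ ·)).length = B.card := Finset.length_sort _
  have hc := hP.2 B hB
  rw [← hlen] at hc
  have hw := fun i hi => @wordOf_eq n P hP B hB i hi
  simp only [hmem] at hw
  generalize B.sort (· ≤ ·) = l at *
  cases l with
  | nil => simp at hc
  | cons a l =>
    obtain ⟨m, b, rfl⟩ : ∃ m b, l = m ++ [b] := by
      rcases List.eq_nil_or_concat l with h | ⟨m, a, h⟩
      · simp [h] at hc
      · exact ⟨m, a, by simpa using h⟩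
    simp only [List.pairwise_cons, List.pairwise_append, List.mem_append, List.mem_singleton] at hs
    obtain ⟨ha, hm, -, hmb⟩ := hs
    have hab : a < b := ha b (Or.inr rfl)
    have wa : wordOf P a = Lt.e := by
      rw [hw a (by simp), if_pos]
      intro j hj
      simp only [List.mem_cons, List.mem_append, List.not_mem_nil, or_false] at hj
      rcases hj with rfl | hj
      · exact le_rfl
      · exact (ha j hj).le
    have wb : wordOf P b = Lt.f := by
      rw [hw b (by simp), if_neg, if_pos]
      · intro j hj
        simp only [List.mem_cons, List.mem_append, List.not_mem_nil, or_false] at hj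
        rcases hj with rfl | hj | rfl
        · exact hab.le
        · exact (hmb j hj b rfl).le
        · exact le_rfl
      · intro h
        exact absurd (h a (by simp)) (not_le.2 hab)
    have wm : ∀ j ∈ m, wordOf P j = Lt.h := by
      intro j hj
      rw [hw j (by simp [hj]), if_neg, if_neg]
      · intro h
        exact absurd (h b (by simp)) (not_le.2 (hmb j hj b rfl))
      · intro h
        exact absurd (h a (by simp)) (not_le.2 (ha j (Or.inl hj)))
    have := g.lVal_EHF (m.map (wordOf P)) (by
      intro x hx
      obtain ⟨j, hj, rfl⟩ := List.mem_map.1 hx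
      exact wm j hj)
    convert this using 2
    simp [wa, wb]

/-! ### noncrossing partitions are determined by their words -/

def lev {n : ℕ} (w : Fin n → Lt) (i : Fin n) : ℤ := max (ht w i.val) (ht w (i.val + 1))

def rel {n : ℕ} (w : Fin n → Lt) (i j : Fin n) : Prop :=
  lev w i = lev w j ∧ ∀ k : ℕ, min i.val j.val < k → k ≤ max i.val j.val → lev w i ≤ ht w k

theorem rel_symm {n : ℕ} {w : Fin n → Lt} {i j : Fin n} (h : rel w i j) : rel w j i := by
  refine ⟨h.1.symm, fun k h1 h2 => ?_⟩
  rw [← h.1]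
  exact h.2 k (by omega) (by omega)

theorem rel_refl {n : ℕ} (w : Fin n → Lt) (i : Fin n) : rel w i i :=
  ⟨rfl, fun k h1 h2 => by omega⟩

theorem rel_trans {n : ℕ} {w : Fin n → Lt} {i j l : Fin n} (h : rel w i j) (h' : rel w j l) :
    rel w i l := by
  refine ⟨h.1.trans h'.1, fun k h1 h2 => ?_⟩
  by_cases c : min i.val j.val < k ∧ k ≤ max i.val j.val
  · exact h.2 k c.1 c.2
  · rw [h.1]
    exact h'.2 k (by omega) (by omega)

def Cv {n : ℕ} (B : Finset (Fin n)) (i : Fin n) : Prop :=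
  (∃ j ∈ B, j ≤ i) ∧ (∃ j ∈ B, i ≤ j)

open Classical in
theorem lev_wordOf {n : ℕ} {P : Finset (Finset (Fin n))} (hP : IsPartitionGe2 n P) (i : Fin n) :
    lev (wordOf P) i = ((P.filter fun B => Cv B i).card : ℤ) := by
  unfold lev
  rw [ht_wordOf hP, ht_wordOf hP]
  obtain ⟨B, ⟨hB, hi⟩, hu⟩ := hP.1 i
  apply le_antisymm
  · apply max_le
    · norm_cast
      apply Finset.card_le_card
      apply Finset.monotone_filter_right
      rintro D - ⟨⟨a, ha, h1⟩, ⟨b, hb, h2⟩⟩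
      exact ⟨⟨a, ha, Fin.le_def.2 (by omega)⟩, ⟨b, hb, Fin.le_def.2 (by omega)⟩⟩
    · norm_cast
      apply Finset.card_le_card
      apply Finset.monotone_filter_right
      rintro D - ⟨⟨a, ha, h1⟩, ⟨b, hb, h2⟩⟩
      exact ⟨⟨a, ha, Fin.le_def.2 (by omega)⟩, ⟨b, hb, Fin.le_def.2 (by omega)⟩⟩
  · obtain ⟨c, hc, hci⟩ : ∃ c ∈ B, c ≠ i := Finset.exists_mem_ne (by have := hP.2 B hB; omega) i
    have hne : ∀ D ∈ P, D ≠ B → ∀ a ∈ D, a.val ≠ i.val := by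
      intro D hD hDB a ha h
      obtain rfl := Fin.ext h
      exact hDB (hu D ⟨hD, ha⟩)
    have hci' : c.val ≠ i.val := fun h => hci (Fin.ext h)
    rcases lt_or_gt_of_ne hci' with hlt | hlt
    · apply le_max_of_le_left
      norm_cast
      apply Finset.card_le_card
      intro D hD
      rw [Finset.mem_filter] at hD ⊢
      obtain ⟨hD, ⟨a, ha, h1⟩, ⟨b, hb, h2⟩⟩ := hD
      refine ⟨hD, ?_⟩
      by_cases hDB : D = B
      · subst hDB
        exact ⟨⟨c, hc, hlt⟩, ⟨i, hi, le_rfl⟩⟩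
      · have := hne D hD hDB a ha
        have := hne D hD hDB b hb
        rw [Fin.le_def] at h1 h2
        exact ⟨⟨a, ha, by omega⟩, ⟨b, hb, by omega⟩⟩
    · apply le_max_of_le_right
      norm_cast
      apply Finset.card_le_card
      intro D hD
      rw [Finset.mem_filter] at hD ⊢
      obtain ⟨hD, ⟨a, ha, h1⟩, ⟨b, hb, h2⟩⟩ := hD
      refine ⟨hD, ?_⟩
      by_cases hDB : D = B
      · subst hDB
        exact ⟨⟨i, hi, by omega⟩, ⟨c, hc, by omega⟩⟩
      · have := hne D hD hDB a ha
        have := hne D hD hDB b hb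
        rw [Fin.le_def] at h1 h2
        exact ⟨⟨a, ha, by omega⟩, ⟨b, hb, by omega⟩⟩

theorem cv_aux {n : ℕ} {P : Finset (Finset (Fin n))} (hP : IsRiordanPartition n P)
    {B : Finset (Fin n)} (hB : B ∈ P) {i j : Fin n} (hi : i ∈ B) (hj : j ∈ B) (hij : i < j)
    {D : Finset (Fin n)} (hD : D ∈ P) (h : Cv D i ∨ Cv D j) :
    (∃ a ∈ D, a ≤ i) ∧ (∃ b ∈ D, j ≤ b) := by
  by_cases hDB : D = B
  · subst hDB
    exact ⟨⟨i, hi, le_rfl⟩, ⟨j, hj, le_rfl⟩⟩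
  have hne : ∀ a ∈ D, a ≠ i ∧ a ≠ j := by
    intro a ha
    constructor
    · rintro rfl; exact hDB (part_unique hP.1 hD hB ha hi)
    · rintro rfl; exact hDB (part_unique hP.1 hD hB ha hj)
  rcases h with ⟨⟨a, ha, h1⟩, ⟨b, hb, h2⟩⟩ | ⟨⟨a, ha, h1⟩, ⟨b, hb, h2⟩⟩
  · have a1 := lt_of_le_of_ne h1 (hne a ha).1
    have b1 := lt_of_le_of_ne h2 (hne b hb).1.symm
    refine ⟨⟨a, ha, h1⟩, ⟨b, hb, ?_⟩⟩
    by_contra hc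
    exact hP.2 ⟨a, i, b, j, a1, b1, not_le.1 hc, D, hD, B, hB, hDB, ha, hb, hi, hj⟩
  · have a1 := lt_of_le_of_ne h1 (hne a ha).2
    have b1 := lt_of_le_of_ne h2 (hne b hb).2.symm
    refine ⟨⟨a, ha, ?_⟩, ⟨b, hb, h2⟩⟩
    by_contra hc
    exact hP.2 ⟨i, a, j, b, not_le.1 hc, a1, b1, B, hB, D, hD, Ne.symm hDB, hi, hj, ha, hb⟩

theorem rel_of_lt {n : ℕ} {P : Finset (Finset (Fin n))} (hP : IsRiordanPartition n P)
    {B : Finset (Fin n)} (hB : B ∈ P) {i j : Fin n} (hi : i ∈ B) (hj : j ∈ B) (hij : i < j) :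
    rel (wordOf P) i j := by
  classical
  refine ⟨?_, fun k h1 h2 => ?_⟩
  · rw [lev_wordOf hP.1, lev_wordOf hP.1]
    congr 2
    apply Finset.filter_congr
    intro D hD
    constructor
    · intro h
      obtain ⟨⟨a, ha, h1⟩, ⟨b, hb, h2⟩⟩ := cv_aux hP hB hi hj hij hD (Or.inl h)
      exact ⟨⟨a, ha, h1.trans hij.le⟩, ⟨b, hb, h2⟩⟩
    · intro h
      obtain ⟨⟨a, ha, h1⟩, ⟨b, hb, h2⟩⟩ := cv_aux hP hB hi hj hij hD (Or.inr h)
      exact ⟨⟨a, ha, h1⟩, ⟨b, hb, hij.le.trans h2⟩⟩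
  · rw [lev_wordOf hP.1, ht_wordOf hP.1]
    norm_cast
    apply Finset.card_le_card
    intro D hD
    rw [Finset.mem_filter] at hD ⊢
    obtain ⟨⟨a, ha, h3⟩, ⟨b, hb, h4⟩⟩ := cv_aux hP hB hi hj hij hD.1 (Or.inl hD.2)
    rw [Fin.le_def] at h3 h4
    rw [Fin.lt_def] at hij
    exact ⟨hD.1, ⟨a, ha, by omega⟩, ⟨b, hb, by omega⟩⟩

theorem rel_of_same {n : ℕ} {P : Finset (Finset (Fin n))} (hP : IsRiordanPartition n P)
    {B : Finset (Fin n)} (hB : B ∈ P) {i j : Fin n} (hi : i ∈ B) (hj : j ∈ B) :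
    rel (wordOf P) i j := by
  rcases lt_trichotomy i j with h | h | h
  · exact rel_of_lt hP hB hi hj h
  · subst h; exact rel_refl _ _
  · exact rel_symm (rel_of_lt hP hB hj hi h)

theorem same_of_rel_lt {n : ℕ} {P : Finset (Finset (Fin n))} (hP : IsRiordanPartition n P)
    {B C : Finset (Fin n)} (hB : B ∈ P) (hC : C ∈ P) {i j : Fin n} (hi : i ∈ B) (hj : j ∈ C)
    (hij : i < j) (h : rel (wordOf P) i j) : B = C := by
  classical
  have hij' : i.val < j.val := hij
  have hneB : B.Nonempty := ⟨i, hi⟩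
  have hneC : C.Nonempty := ⟨j, hj⟩
  have b1 : j ≤ B.max' hneB := by
    by_contra hc
    set b := B.max' hneB with hb
    have hbB : b ∈ B := B.max'_mem hneB
    have hib : i ≤ b := B.le_max' i hi
    have hc' : b.val < j.val := not_le.1 hc
    rw [Fin.le_def] at hib
    have h1 := h.2 (b.val + 1) (by omega) (by omega)
    rw [(rel_of_same hP hB hi hbB).1, lev_wordOf hP.1, ht_wordOf hP.1] at h1
    apply absurd h1
    rw [not_le]
    norm_cast
    apply Finset.card_lt_card
    rw [Finset.ssubset_iff_of_subset]
    · refine ⟨B, ?_, ?_⟩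
      · rw [Finset.mem_filter]
        exact ⟨hB, ⟨b, hbB, le_rfl⟩, ⟨b, hbB, le_rfl⟩⟩
      · rw [Finset.mem_filter]
        rintro ⟨-, -, c, hc, h2⟩
        have : c.val ≤ b.val := B.le_max' c hc
        omega
    · intro D hD
      rw [Finset.mem_filter] at hD ⊢
      obtain ⟨hD, ⟨a, ha, h3⟩, ⟨c, hc, h4⟩⟩ := hD
      exact ⟨hD, ⟨a, ha, Fin.le_def.2 (by omega)⟩, ⟨c, hc, Fin.le_def.2 (by omega)⟩⟩
  have c1 : C.min' hneC ≤ i := by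
    by_contra hc
    set b := C.min' hneC with hb
    have hbC : b ∈ C := C.min'_mem hneC
    have hbj : b ≤ j := C.min'_le j hj
    have hc' : i.val < b.val := not_le.1 hc
    rw [Fin.le_def] at hbj
    have h1 := h.2 (b.val) (by omega) (by omega)
    rw [h.1, (rel_of_same hP hC hj hbC).1, lev_wordOf hP.1, ht_wordOf hP.1] at h1
    apply absurd h1
    rw [not_le]
    norm_cast
    apply Finset.card_lt_card
    rw [Finset.ssubset_iff_of_subset]
    · refine ⟨C, ?_, ?_⟩
      · rw [Finset.mem_filter]
        exact ⟨hC, ⟨b, hbC, le_rfl⟩, ⟨b, hbC, le_rfl⟩⟩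
      · rw [Finset.mem_filter]
        rintro ⟨-, ⟨c, hc, h2⟩, -⟩
        have : b.val ≤ c.val := C.min'_le c hc
        omega
    · intro D hD
      rw [Finset.mem_filter] at hD ⊢
      obtain ⟨hD, ⟨a, ha, h3⟩, ⟨c, hc, h4⟩⟩ := hD
      exact ⟨hD, ⟨a, ha, Fin.le_def.2 (by omega)⟩, ⟨c, hc, Fin.le_def.2 (by omega)⟩⟩
  by_contra hBC
  have hm := C.min'_mem hneC
  have hM := B.max'_mem hneB
  have n1 : C.min' hneC ≠ i := by
    intro he
    rw [he] at hm
    exact hBC (part_unique hP.1 hB hC hi hm)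
  have n2 : j ≠ B.max' hneB := by
    intro he
    rw [← he] at hM
    exact hBC (part_unique hP.1 hB hC hM hj)
  exact hP.2 ⟨_, i, j, _, lt_of_le_of_ne c1 n1, hij, lt_of_le_of_ne b1 n2, C, hC, B, hB,
    Ne.symm hBC, hm, hj, hi, hM⟩

theorem same_of_rel {n : ℕ} {P : Finset (Finset (Fin n))} (hP : IsRiordanPartition n P)
    {B : Finset (Fin n)} (hB : B ∈ P) {i j : Fin n} (hi : i ∈ B) 
    (h : rel (wordOf P) i j) : j ∈ B := by
  obtain ⟨C, ⟨hC, hj⟩, -⟩ := hP.1.1 j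
  rcases lt_trichotomy i j with h' | h' | h'
  · rwa [same_of_rel_lt hP hB hC hi hj h' h]
  · rwa [← h']
  · rwa [← same_of_rel_lt hP hC hB hj hi h' (rel_symm h)]

theorem wordOf_sub {n : ℕ} {P Q : Finset (Finset (Fin n))} (hP : IsRiordanPartition n P)
    (hQ : IsRiordanPartition n Q) (h : wordOf P = wordOf Q) : P ⊆ Q := by
  intro B hB
  have hc := hP.1.2 B hB
  obtain ⟨i, hi⟩ : B.Nonempty := Finset.card_pos.1 (by omega)
  obtain ⟨C, ⟨hC, hiC⟩, -⟩ := hQ.1.1 i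
  have : B = C := by
    ext j
    constructor
    · intro hj
      apply same_of_rel hQ hC hiC
      rw [← h]
      exact rel_of_same hP hB hi hj
    · intro hj
      apply same_of_rel hP hB hi
      rw [h]
      exact rel_of_same hQ hC hiC hj
  rwa [this]

theorem wordOf_inj {n : ℕ} {P Q : Finset (Finset (Fin n))} (hP : IsRiordanPartition n P)
    (hQ : IsRiordanPartition n Q) (h : wordOf P = wordOf Q) : P = Q :=
  Finset.Subset.antisymm (wordOf_sub hP hQ h) (wordOf_sub hQ hP h.symm)

theorem word_eq_of_ht {n : ℕ} {v w : Fin n → Lt} (h : ∀ k, ht v k = ht w k) : v = w := by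
  funext i
  have h1 := ht_succ v i
  have h2 := ht_succ w i
  rw [h, h] at h1
  have h3 : (v i).wt = (w i).wt := by omega
  revert h3
  cases v i <;> cases w i <;> simp [Lt.wt]

/-! ### every Riordan word comes from a partition -/

theorem Rio_list (k : ℕ) (l : List Lt) (h : Rio k l) :
    (∀ i, 0 ≤ k + lwt (l.take i)) ∧ k + lwt l = 0 ∧
      ∀ i, l[i]? = some Lt.h → 1 ≤ k + lwt (l.take i) := by
  induction l generalizing k with
  | nil => 
    simp only [Rio] at h
    simp [lwt, h]
  | cons x u ih =>
    have aux : ∀ k' : ℕ, (k' : ℤ) = k + x.wt → Rio k' u → (x = Lt.h → 1 ≤ k) →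
      ((∀ i, 0 ≤ k + lwt ((x :: u).take i)) ∧ k + lwt (x :: u) = 0 ∧
      ∀ i, (x :: u)[i]? = some Lt.h → 1 ≤ k + lwt ((x :: u).take i)) := by
      intro k' hk' hr hx
      obtain ⟨h1, h2, h3⟩ := ih k' hr
      simp only [lwt] at *
      refine ⟨?_, ?_, ?_⟩
      · intro i
        cases i with
        | zero => simp
        | succ i =>
          have := h1 i
          simp only [List.take_succ_cons, List.map_cons, List.sum_cons]
          omega
      · simp only [List.map_cons, List.sum_cons]
        omega
      · intro i hi
        cases i with
        | zero =>
          simp at hi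
          have := hx hi
          simp; omega
        | succ i =>
          have := h3 i (by simpa using hi)
          simp only [List.take_succ_cons, List.map_cons, List.sum_cons]
          omega
    cases x
    · exact aux (k+1) (by simp [Lt.wt]) h (by simp)
    · exact aux k (by simp [Lt.wt]) h.2 (fun _ => h.1)
    · exact aux (k-1) (by have := h.1; simp only [Lt.wt]; omega) h.2 (by simp)

theorem ht_eq_take {n : ℕ} (w : Fin n → Lt) (k : ℕ) : ht w k = lwt ((List.ofFn w).take k) := by
  unfold lwt ht
  rw [List.map_take, List.map_ofFn, List.sum_take_ofFn, Finset.sum_filter]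
  rfl

structure RW {n : ℕ} (w : Fin n → Lt) : Prop where
  nonneg : ∀ k, 0 ≤ ht w k
  last : ht w n = 0
  flat : ∀ i, w i = Lt.h → 1 ≤ ht w i.val

theorem RW_of_Rio {n : ℕ} {w : Fin n → Lt} (h : Rio 0 (List.ofFn w)) : RW w := by
  obtain ⟨h1, h2, h3⟩ := Rio_list _ _ h
  simp only [Nat.cast_zero, zero_add] at h1 h2 h3
  refine ⟨fun k => ?_, ?_, fun i hi => ?_⟩
  · rw [ht_eq_take]; exact h1 k
  · rw [ht_eq_take, List.take_of_length_le (by simp)]; exact h2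
  · rw [ht_eq_take]
    apply h3
    simp [hi]

section
variable {n : ℕ} {w : Fin n → Lt}

theorem lev_e {i : Fin n} (h : w i = Lt.e) : lev w i = ht w (i.val+1) ∧ ht w (i.val+1) = ht w i.val + 1 := by
  have := ht_succ w i
  rw [h] at this
  simp only [Lt.wt] at this
  unfold lev; omega

theorem lev_h {i : Fin n} (h : w i = Lt.h) : lev w i = ht w (i.val+1) ∧ ht w (i.val+1) = ht w i.val := by
  have := ht_succ w i
  rw [h] at this
  simp only [Lt.wt] at this
  unfold lev; omega

theorem lev_f {i : Fin n} (h : w i = Lt.f) : lev w i = ht w i.val ∧ ht w (i.val+1) = ht w i.val - 1 := by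
  have := ht_succ w i
  rw [h] at this
  simp only [Lt.wt] at this
  unfold lev; omega

theorem RW.lev_pos (hw : RW w) (i : Fin n) : 1 ≤ lev w i := by
  have h0 := hw.nonneg i.val
  have h1 := hw.nonneg (i.val+1)
  cases h : w i
  · have := lev_e h; omega
  · have := lev_h h; have := hw.flat i h; omega
  · have := lev_f h; omega

theorem step_bd (i : Fin n) : ht w i.val - 1 ≤ ht w (i.val+1) ∧ ht w (i.val+1) ≤ ht w i.val + 1 := by
  have := ht_succ w i
  cases h : w i <;> rw [h] at this <;> simp only [Lt.wt] at this <;> omega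

theorem RW.up (hw : RW w) (i : Fin n) (hi : w i ≠ Lt.f) : ∃ k, i < k ∧ rel w i k := by
  classical
  have hl : lev w i = ht w (i.val + 1) := by
    cases h : w i
    · exact (lev_e h).1
    · exact (lev_h h).1
    · exact absurd h hi
  have hp := hw.lev_pos i
  have hin := i.isLt
  have hn : i.val + 1 ≠ n := by
    intro h
    rw [h, hw.last] at hl
    omega
  have hex : ∃ k, i.val < k ∧ ht w (k+1) < lev w i := by
    refine ⟨n - 1, by omega, ?_⟩
    rw [show n - 1 + 1 = n by omega, hw.last]
    omega
  obtain ⟨hk1, hk2⟩ := Nat.find_spec hex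
  have hmin : ∀ m, m < Nat.find hex → ¬ (i.val < m ∧ ht w (m+1) < lev w i) :=
    fun m hm => Nat.find_min hex hm
  have hkn : Nat.find hex ≤ n - 1 := Nat.find_min' hex (by
    refine ⟨by omega, ?_⟩
    rw [show n - 1 + 1 = n by omega, hw.last]
    omega)
  generalize Nat.find hex = k at *
  have hrange : ∀ m, i.val < m → m ≤ k → lev w i ≤ ht w m := by
    intro m h1 h2
    by_cases hm : m = i.val + 1
    · rw [hm, hl]
    · have := hmin (m-1) (by omega)
      rw [show m - 1 + 1 = m by omega] at this
      by_contra hc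
      exact this ⟨by omega, by omega⟩
  refine ⟨⟨k, by omega⟩, hk1, ?_, ?_⟩
  · have h1 := hrange k hk1 le_rfl
    have h2 := @step_bd n w ⟨k, by omega⟩
    simp only [lev] at *
    omega
  · intro m h1 h2
    simp only at h1 h2
    exact hrange m (by omega) (by omega)

theorem RW.down (hw : RW w) (i : Fin n) (hi : w i ≠ Lt.e) : ∃ k, k < i ∧ rel w i k := by
  classical
  have hl : lev w i = ht w i.val := by
    cases h : w i
    · exact absurd h hi
    · have := lev_h h; omega
    · exact (lev_f h).1
  have hp := hw.lev_pos i
  have hin := i.isLt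
  set k := Nat.findGreatest (fun k => ht w k < lev w i) i.val with hk
  have hk1 : ht w k < lev w i :=
    Nat.findGreatest_spec (P := fun k => ht w k < lev w i) (Nat.zero_le _)
      (by rw [ht_zero]; omega)
  have hk2 : k ≤ i.val := Nat.findGreatest_le _
  have hk3 : k ≠ i.val := by
    intro h; rw [h, hl] at hk1; omega
  have hrange : ∀ m, k < m → m ≤ i.val → lev w i ≤ ht w m := by
    intro m h1 h2
    exact not_lt.1 (Nat.findGreatest_is_greatest (P := fun k => ht w k < lev w i) h1 h2)
  refine ⟨⟨k, by omega⟩, Fin.lt_def.2 (by simp only; omega), ?_, ?_⟩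
  · have h1 := hrange (k+1) (by omega) (by omega)
    have h2 := @step_bd n w ⟨k, by omega⟩
    simp only [lev] at *
    omega
  · intro m h1 h2
    simp only at h1 h2
    exact hrange m (by omega) (by omega)

theorem rel_e {i j : Fin n} (hi : w i = Lt.e) (h : rel w i j) : i ≤ j := by
  by_contra hc
  have hc' : j.val < i.val := not_le.1 hc
  have := h.2 i.val (by omega) (by omega)
  have := lev_e hi
  omega

theorem rel_f {i j : Fin n} (hi : w i = Lt.f) (h : rel w i j) : j ≤ i := by
  by_contra hc
  have hc' : i.val < j.val := not_le.1 hc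
  have := h.2 (i.val + 1) (by omega) (by omega)
  have := lev_f hi
  omega

open Classical in
theorem exists_partition (hw : RW w) : ∃ P, IsRiordanPartition n P ∧ wordOf P = w := by
  set blk : Fin n → Finset (Fin n) := fun i => Finset.univ.filter (rel w i) with hblk
  have hm : ∀ i j, j ∈ blk i ↔ rel w i j := by intro i j; simp [hblk]
  have heq : ∀ i j, rel w i j → blk i = blk j := by
    intro i j h
    ext k
    rw [hm, hm]
    exact ⟨fun h' => rel_trans (rel_symm h) h', fun h' => rel_trans h h'⟩
  set P := Finset.univ.image blk with hPdef
  have hmP : ∀ i, blk i ∈ P := fun i => Finset.mem_image_of_mem _ (Finset.mem_univ i)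
  have hP : ∀ B ∈ P, ∃ i, blk i = B := by
    intro B hB
    obtain ⟨i, -, h⟩ := Finset.mem_image.1 hB
    exact ⟨i, h⟩
  have hpart : IsPartitionGe2 n P := by
    constructor
    · intro i
      refine ⟨blk i, ⟨hmP i, (hm i i).2 (rel_refl w i)⟩, ?_⟩
      rintro B ⟨hB, hi⟩
      obtain ⟨j, rfl⟩ := hP B hB
      exact heq _ _ ((hm _ _).1 hi)
    · intro B hB
      obtain ⟨i, rfl⟩ := hP B hB
      have : ∃ k, i ≠ k ∧ rel w i k := by
        by_cases h : w i = Lt.f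
        · obtain ⟨k, h1, h2⟩ := hw.down i (by rw [h]; simp)
          exact ⟨k, h1.ne', h2⟩
        · obtain ⟨k, h1, h2⟩ := hw.up i h
          exact ⟨k, h1.ne, h2⟩
      obtain ⟨k, h1, h2⟩ := this
      exact Finset.one_lt_card.2 ⟨i, (hm i i).2 (rel_refl w i), k, (hm i k).2 h2, h1⟩
  refine ⟨P, ⟨hpart, ?_⟩, ?_⟩
  · rintro ⟨i, j, k, l, hij, hjk, hkl, B, hB, C, hC, hBC, hi, hk, hj, hl⟩
    obtain ⟨b, rfl⟩ := hP B hB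
    obtain ⟨c, rfl⟩ := hP C hC
    rw [hm] at hi hk hj hl
    have hik := rel_trans (rel_symm hi) hk
    have hjl := rel_trans (rel_symm hj) hl
    rw [Fin.lt_def] at hij hjk hkl
    have a1 := hik.2 j.val (by omega) (by omega)
    have a2 := hjl.2 k.val (by omega) (by omega)
    have a3 : lev w i ≤ lev w j := le_max_of_le_left a1
    have a4 : lev w j ≤ lev w k := le_max_of_le_left a2
    have a5 := hik.1
    have hjk' : rel w j k := by
      refine ⟨by omega, fun m h1 h2 => ?_⟩
      have := hik.2 m (by omega) (by omega)
      omega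
    apply hBC
    rw [heq _ _ hk, heq _ _ hj, heq _ _ hjk']
  · funext i
    rw [wordOf_eq hpart (hmP i) ((hm i i).2 (rel_refl w i))]
    simp only [hm]
    cases h : w i
    · rw [if_pos]
      intro j hj
      exact rel_e h hj
    · obtain ⟨k, h1, h2⟩ := hw.down i (by rw [h]; simp)
      obtain ⟨k', h1', h2'⟩ := hw.up i (by rw [h]; simp)
      rw [if_neg, if_neg]
      · intro hc; exact absurd (hc k' h2') (not_le.2 h1')
      · intro hc; exact absurd (hc k h2) (not_le.2 h1)
    · obtain ⟨k, h1, h2⟩ := hw.down i (by rw [h]; simp)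
      rw [if_neg, if_pos]
      · intro j hj
        exact rel_f h hj
      · intro hc; exact absurd (hc k h2) (not_le.2 h1)

end

/-! ### assembling -/

theorem blockVal_update {κ : sl2 →ₗ[ℚ] sl2 →ₗ[ℚ] ℚ} {n : ℕ} (x : Fin n → sl2) (i : Fin n) (a : sl2)
    (C : Finset (Fin n)) (h : i ∉ C) : blockVal κ (Function.update x i a) C = blockVal κ x C := by
  have : (C.sort (· ≤ ·)).map (Function.update x i a) = (C.sort (· ≤ ·)).map x := by
    apply List.map_congr_left
    intro j hj
    rw [Function.update_of_ne]
    rintro rfl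
    exact h ((Finset.mem_sort _).1 hj)
  unfold blockVal
  rw [this]

theorem blockVal_lie {κ : sl2 →ₗ[ℚ] sl2 →ₗ[ℚ] ℚ} (g : Good κ) {n : ℕ} (y : sl2) (x : Fin n → sl2)
    (B : Finset (Fin n)) : ∑ i ∈ B, blockVal κ (Function.update x i ⁅y, x i⁆) B = 0 := by
  have := g.lVal_lie y x (B.sort (· ≤ ·)) (Finset.sort_nodup _ _)
  rw [← List.sum_toFinset _ (Finset.sort_nodup _ _), Finset.sort_toFinset] at this
  exact this

theorem tree_mem {κ : sl2 →ₗ[ℚ] sl2 →ₗ[ℚ] ℚ} (g : Good κ) {n : ℕ} {P : Finset (Finset (Fin n))}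
    (hP : IsPartitionGe2 n P) (T : TP n)
    (hT : ∀ x : Fin n → sl2, pairT κ n x T = ∏ B ∈ P, blockVal κ x B) : T ∈ Invariants n := by
  classical
  rw [mem_inv_iff g]
  intro y x
  simp only [derv, hT]
  rw [part_sum hP]
  apply Finset.sum_eq_zero
  intro B hB
  have : ∀ i ∈ B, ∏ C ∈ P, blockVal κ (Function.update x i ⁅y, x i⁆) C =
      blockVal κ (Function.update x i ⁅y, x i⁆) B * ∏ C ∈ P.erase B, blockVal κ x C := by
    intro i hi
    rw [← Finset.mul_prod_erase _ _ hB]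
    congr 1
    apply Finset.prod_congr rfl
    intro C hC
    apply blockVal_update
    intro hiC
    exact Finset.ne_of_mem_erase hC (part_unique hP (Finset.mem_of_mem_erase hC) hB hiC hi)
  rw [Finset.sum_congr rfl this, ← Finset.sum_mul, blockVal_lie g, zero_mul]

theorem tree_basis_of_invariants
    (κ : sl2 →ₗ[ℚ] sl2 →ₗ[ℚ] ℚ)
    (hHH : κ H H = 2) (hEF : κ E F = 1) (hFE : κ F E = 1)
    (hHE : κ H E = 0) (hEH : κ E H = 0) (hHF : κ H F = 0) (hFH : κ F H = 0)
    (hEE : κ E E = 0) (hFF : κ F F = 0) :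
    ∀ n, 2 ≤ n →
    ∀ T : {P : Finset (Finset (Fin n)) // IsRiordanPartition n P} → TP n,
      (∀ P, ∀ x : Fin n → sl2,
        pairT κ n x (T P) = ∏ B ∈ P.1, blockVal κ x B) →
      LinearIndependent ℚ T ∧ Submodule.span ℚ (Set.range T) = Invariants n := by
  classical
  have g : Good κ := ⟨hHH, hEF, hFE, hHE, hEH, hHF, hFH, hEE, hFF⟩
  intro n _ T hT
  have hli : LinearIndependent ℚ T := by
    rw [Fintype.linearIndependent_iff]
    intro c hc
    by_contra hne
    push Not at hne
    obtain ⟨P0, hP0⟩ := hne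
    let S := Finset.univ.filter fun P => c P ≠ 0
    obtain ⟨P, hPS, hmax⟩ := Finset.exists_max_image S
      (fun P => ∑ k ∈ Finset.range n, ht (wordOf P.1) k) ⟨P0, by simp [S, hP0]⟩
    have hcP : c P ≠ 0 := by simpa [S] using hPS
    have h1 := congrArg (pairT κ n fun i => (wordOf P.1 i).vec) hc
    rw [map_sum, map_zero, Finset.sum_eq_single P] at h1
    · rw [map_smul, hT, smul_eq_mul] at h1
      exact (mul_ne_zero hcP (diag_ne g P.2.1)) h1
    · intro Q _ hQP
      rw [map_smul, hT, smul_eq_mul]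
      by_contra hq
      have hcQ := left_ne_zero_of_mul hq
      have hle := ht_le g (wordOf P.1) Q.2.1 (right_ne_zero_of_mul hq)
      have hge := hmax Q (by simp [S, hcQ])
      have heq := (Finset.sum_eq_sum_iff_of_le (s := Finset.range n) (fun k _ => hle k)).1
        (le_antisymm (Finset.sum_le_sum fun k _ => hle k) hge)
      apply hQP
      apply Subtype.ext
      apply wordOf_inj Q.2 P.2
      apply word_eq_of_ht
      intro k
      by_cases hk : k < n
      · exact (heq k (Finset.mem_range.2 hk)).symm
      · have hz : ∀ R : {P : Finset (Finset (Fin n)) // IsRiordanPartition n P},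
            ht (wordOf R.1) k = 0 := by
          intro R
          rw [ht_wordOf R.2.1]
          norm_cast
          rw [Finset.card_eq_zero, Finset.filter_eq_empty_iff]
          rintro B - ⟨-, b, -, hb⟩
          have := b.isLt
          omega
        rw [hz, hz]
    · intro h; exact absurd (Finset.mem_univ _) h
  refine ⟨hli, ?_⟩
  let ev' : Invariants n →ₗ[ℚ] ({P : Finset (Finset (Fin n)) // IsRiordanPartition n P} → ℚ) :=
    LinearMap.pi fun P => (pairT κ n fun i => (wordOf P.1 i).vec) ∘ₗ (Invariants n).subtype
  have hinj : Function.Injective ev' := by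
    rw [← LinearMap.ker_eq_bot, LinearMap.ker_eq_bot']
    intro t ht0
    apply Subtype.ext
    apply invariants_inj g n t.1 t.2
    intro w hw
    obtain ⟨P, hP, rfl⟩ := exists_partition (RW_of_Rio hw)
    exact congrFun ht0 ⟨P, hP⟩
  have : FiniteDimensional ℚ (Invariants n) := FiniteDimensional.of_injective ev' hinj
  apply Submodule.eq_of_le_of_finrank_le
  · rw [Submodule.span_le]
    rintro _ ⟨P, rfl⟩
    exact tree_mem g P.2.1 (T P) (hT P)
  · rw [finrank_span_eq_card hli]
    have := LinearMap.finrank_le_finrank_of_injective hinj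
    simpa using this
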